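/- Let C be an (X,2)-neighbour transitive code with |C| > 1, minimum distance δ ≥ 5 and X ∩ B = 1. Then μ(X) acts 2-transitively on Fin m. -/

import Mathlib

/-!
Since `δ ≥ 5`, a vertex at distance `s ≤ 2` from a codeword `β` lies in `C_s` and has `β` as its only
nearest codeword. Hence the stabiliser `X_β` is transitive on the sphere of radius `s` around `β`
(`CTC.exists_fix`). For `s = 2` this makes `μ(X)` transitive on unordered pairs of coordinates
(`CTC.exists_pair`), so it remains to find one element of `μ(X)` that interchanges two coordinates.

For this it suffices that `μ(X)` contains an involution. The case `s = 1` of the above, together with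
transitivity of `X` on `C`, shows that the stabiliser in `X` of a coordinate `i` acts 2-transitively
on the letters in that coordinate; in particular some `x ∈ X` fixes `i` and interchanges two letters
there (`CTC.exists_letter_swap`). Every odd power of `x` does the same. As `X ∩ B = 1`, the order `n`
of `μ(x)` satisfies `x ^ n = 1`, so `n` is even and `μ(x) ^ (n / 2)` is an involution
(`CTC.exists_coord_swap`).
-/


namespace CTC

variable {m : ℕ} {Q : Type*}

/-- The automorphism of the Hamming graph `H(m,q)` given by the pair `(g, σ)`,
acting on a vertex `α` by `(α^x) i = (g (σ⁻¹ i)) (α (σ⁻¹ i))`. -/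
def toPerm (g : Fin m → Equiv.Perm Q) (σ : Equiv.Perm (Fin m)) :
    Equiv.Perm (Fin m → Q) :=
  (Equiv.piCongrRight g).trans (σ.arrowCongr (Equiv.refl Q))

@[simp] lemma toPerm_apply (g : Fin m → Equiv.Perm Q) (σ : Equiv.Perm (Fin m))
    (α : Fin m → Q) (i : Fin m) :
    toPerm g σ α i = g (σ⁻¹ i) (α (σ⁻¹ i)) := rfl

lemma toPerm_one : toPerm (fun _ : Fin m => (1 : Equiv.Perm Q)) 1 = 1 := by
  ext α i
  rfl

lemma toPerm_mul (g h : Fin m → Equiv.Perm Q) (σ τ : Equiv.Perm (Fin m)) :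
    toPerm g σ * toPerm h τ = toPerm (fun j => g (τ j) * h j) (σ * τ) := by
  ext α i
  simp [toPerm_apply, Equiv.Perm.mul_apply]

lemma toPerm_inv (g : Fin m → Equiv.Perm Q) (σ : Equiv.Perm (Fin m)) :
    (toPerm g σ)⁻¹ = toPerm (fun i => (g (σ⁻¹ i))⁻¹) σ⁻¹ := by
  rw [inv_eq_iff_mul_eq_one, toPerm_mul]
  have h1 : (fun j => g (σ⁻¹ j) * (g (σ⁻¹ j))⁻¹) = fun _ : Fin m => (1 : Equiv.Perm Q) := by
    funext j; simp
  have h2 : σ * σ⁻¹ = 1 := by simp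
  rw [show (fun j => g ((σ⁻¹ : Equiv.Perm (Fin m)) j) * (g (σ⁻¹ j))⁻¹)
      = fun _ : Fin m => (1 : Equiv.Perm Q) from h1, h2, toPerm_one]

/-- The automorphism group of the Hamming graph, as a subgroup of the
permutations of the vertex set. -/
def AutG (m : ℕ) (Q : Type*) : Subgroup (Equiv.Perm (Fin m → Q)) where
  carrier := {x | ∃ g σ, x = toPerm g σ}
  one_mem' := ⟨fun _ => 1, 1, toPerm_one.symm⟩
  mul_mem' := by
    rintro x y ⟨g, σ, rfl⟩ ⟨h, τ, rfl⟩
    exact ⟨_, _, toPerm_mul g h σ τ⟩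
  inv_mem' := by
    rintro x ⟨g, σ, rfl⟩
    exact ⟨_, _, toPerm_inv g σ⟩

/-- The base group `B` of `Aut(Γ)`: the automorphisms `(g, σ)` with `σ = 1`. -/
def BaseG (m : ℕ) (Q : Type*) : Subgroup (Equiv.Perm (Fin m → Q)) where
  carrier := {x | ∃ g, x = toPerm g 1}
  one_mem' := ⟨fun _ => 1, toPerm_one.symm⟩
  mul_mem' := by
    rintro x y ⟨g, rfl⟩ ⟨h, rfl⟩
    refine ⟨fun j => g j * h j, ?_⟩
    rw [toPerm_mul]
    simp
  inv_mem' := by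
    rintro x ⟨g, rfl⟩
    refine ⟨fun i => (g i)⁻¹, ?_⟩
    rw [toPerm_inv]
    simp

/-- The projection `μ(X)` of a subgroup `X ≤ Aut(Γ)` to the group of
permutations of the coordinates. -/
def ProjGroup (X : Subgroup (Equiv.Perm (Fin m → Q))) : Subgroup (Equiv.Perm (Fin m)) where
  carrier := {σ | ∃ g, toPerm g σ ∈ X}
  one_mem' := ⟨fun _ => 1, by rw [toPerm_one]; exact X.one_mem⟩
  mul_mem' := by
    rintro σ τ ⟨g, hg⟩ ⟨h, hh⟩
    exact ⟨fun j => g (τ j) * h j, by rw [← toPerm_mul]; exact X.mul_mem hg hh⟩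
  inv_mem' := by
    rintro σ ⟨g, hg⟩
    exact ⟨fun i => (g (σ⁻¹ i))⁻¹, by rw [← toPerm_inv]; exact X.inv_mem hg⟩

variable [DecidableEq Q]

/-- `d(γ, C)`: the distance from a vertex `γ` to the code `C`. -/
noncomputable def distTo (C : Set (Fin m → Q)) (γ : Fin m → Q) : ℕ :=
  sInf {d | ∃ β ∈ C, hammingDist γ β = d}

/-- `C_i`: the set of vertices at distance `i` from the code `C`. -/
def cell (C : Set (Fin m → Q)) (i : ℕ) : Set (Fin m → Q) :=
  {γ | distTo C γ = i}

/-- The covering radius `ρ` of the code `C`. -/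
noncomputable def covRad (C : Set (Fin m → Q)) : ℕ :=
  sSup {e | ∃ γ, distTo C γ = e}

/-- `S` is a single orbit of the subgroup `X`. -/
def IsOrbitOf (X : Subgroup (Equiv.Perm (Fin m → Q))) (S : Set (Fin m → Q)) : Prop :=
  ∃ γ, S = {β | ∃ x ∈ X, x γ = β}

/-- `C` is `(X,s)`-neighbour transitive: `C_i` is an `X`-orbit for `0 ≤ i ≤ s`. -/
def IsNT (C : Set (Fin m → Q)) (X : Subgroup (Equiv.Perm (Fin m → Q))) (s : ℕ) : Prop :=
  ∀ i ≤ s, IsOrbitOf X (cell C i)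

/-- `C` is `X`-completely transitive: `C_i` is an `X`-orbit for `0 ≤ i ≤ ρ`. -/
def IsCT (C : Set (Fin m → Q)) (X : Subgroup (Equiv.Perm (Fin m → Q))) : Prop :=
  IsNT C X (covRad C)

/-- `δ` is the minimum distance of the code `C`. -/
def IsMinDist (C : Set (Fin m → Q)) (δ : ℕ) : Prop :=
  IsLeast {d | ∃ α ∈ C, ∃ β ∈ C, α ≠ β ∧ hammingDist α β = d} δ

/-- The repetition code `Rep(m,q)`: the set of constant vertices. -/
def RepCode (m : ℕ) (Q : Type*) : Set (Fin m → Q) := {α | ∃ a, α = fun _ => a}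

/-- Two codes are equivalent if one is the image of the other under an
automorphism of the Hamming graph. -/
def CodeEquiv (C C' : Set (Fin m → Q)) : Prop :=
  ∃ x ∈ AutG m Q, ⇑x '' C = C'

/-- `Γ_k(γ)`: the set of vertices at Hamming distance `k` from `γ`. -/
def sphere (γ : Fin m → Q) (k : ℕ) : Set (Fin m → Q) := {β | hammingDist γ β = k}

/-- `C` is `s`-regular. -/
def IsSReg (C : Set (Fin m → Q)) (s : ℕ) : Prop :=
  ∀ i ≤ s, ∀ k ≤ m, ∀ γ₁ ∈ cell C i, ∀ γ₂ ∈ cell C i,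
    (sphere γ₁ k ∩ C).ncard = (sphere γ₂ k ∩ C).ncard

/-- `C` is completely regular. -/
def IsCR (C : Set (Fin m → Q)) : Prop := IsSReg C (covRad C)

end CTC

namespace CTC

lemma toPerm_apply_map {m : ℕ} {Q : Type*} (g : Fin m → Equiv.Perm Q) (σ : Equiv.Perm (Fin m))
    (α : Fin m → Q) (i : Fin m) : toPerm g σ α (σ i) = g i (α i) := by
  simp

lemma exists_toPerm_pow {m : ℕ} {Q : Type*} (g : Fin m → Equiv.Perm Q) (σ : Equiv.Perm (Fin m))
    (n : ℕ) : ∃ h, toPerm g σ ^ n = toPerm h (σ ^ n) := by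
  induction n with
  | zero => exact ⟨fun _ => 1, by simp [toPerm_one]⟩
  | succ n ih =>
    obtain ⟨h, hh⟩ := ih
    exact ⟨_, by rw [pow_succ, hh, toPerm_mul, ← pow_succ]⟩

section

variable {m : ℕ} {Q : Type*} [DecidableEq Q]

lemma hammingDist_toPerm (g : Fin m → Equiv.Perm Q) (σ : Equiv.Perm (Fin m))
    (α β : Fin m → Q) : hammingDist (toPerm g σ α) (toPerm g σ β) = hammingDist α β := by
  unfold hammingDist
  symm
  refine Finset.card_equiv σ fun i => ?_
  simp

lemma hammingDist_update (β : Fin m → Q) (i : Fin m) (c : Q) (hc : c ≠ β i) :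
    hammingDist (Function.update β i c) β = 1 := by
  unfold hammingDist
  rw [Finset.card_eq_one]
  refine ⟨i, ?_⟩
  ext k
  by_cases h : k = i
  · subst h; simp [hc]
  · simp [h]

lemma hammingDist_update_update (β : Fin m → Q) (i j : Fin m) (hij : i ≠ j) (c d : Q)
    (hc : c ≠ β i) (hd : d ≠ β j) :
    hammingDist (Function.update (Function.update β i c) j d) β = 2 := by
  unfold hammingDist
  rw [Finset.card_eq_two]
  refine ⟨i, j, hij, ?_⟩
  ext k
  by_cases h : k = j
  · subst h; simp [hd]
  · by_cases h' : k = i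
    · subst h'; simp [h, hc]
    · simp [h, h']

lemma exists_hammingDist_eq_distTo {C : Set (Fin m → Q)} (hC : C.Nonempty) (γ : Fin m → Q) :
    ∃ β ∈ C, hammingDist γ β = distTo C γ := by
  obtain ⟨β, hβ⟩ := hC
  exact Nat.sInf_mem (s := {d | ∃ β ∈ C, hammingDist γ β = d}) ⟨_, β, hβ, rfl⟩

lemma distTo_le {C : Set (Fin m → Q)} {β : Fin m → Q} (hβ : β ∈ C) (γ : Fin m → Q) :
    distTo C γ ≤ hammingDist γ β :=
  Nat.sInf_le ⟨β, hβ, rfl⟩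

lemma mem_cell_zero {C : Set (Fin m → Q)} (hC : C.Nonempty) (γ : Fin m → Q) :
    γ ∈ cell C 0 ↔ γ ∈ C := by
  constructor
  · intro h
    obtain ⟨β, hβ, h'⟩ := exists_hammingDist_eq_distTo hC γ
    rw [show distTo C γ = 0 from h, hammingDist_eq_zero] at h'
    exact h' ▸ hβ
  · intro h
    have := distTo_le h γ
    rw [hammingDist_self] at this
    exact Nat.le_zero.mp this

lemma IsOrbitOf.exists_map {X : Subgroup (Equiv.Perm (Fin m → Q))} {S : Set (Fin m → Q)}
    (h : IsOrbitOf X S) {ν ν' : Fin m → Q} (hν : ν ∈ S) (hν' : ν' ∈ S) :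
    ∃ x ∈ X, x ν = ν' := by
  obtain ⟨γ, rfl⟩ := h
  obtain ⟨x, hx, rfl⟩ := hν
  obtain ⟨y, hy, rfl⟩ := hν'
  exact ⟨y * x⁻¹, X.mul_mem hy (X.inv_mem hx), by simp⟩

lemma IsOrbitOf.map_mem {X : Subgroup (Equiv.Perm (Fin m → Q))} {S : Set (Fin m → Q)}
    (h : IsOrbitOf X S) {ν : Fin m → Q} (hν : ν ∈ S) {x : Equiv.Perm (Fin m → Q)} (hx : x ∈ X) :
    x ν ∈ S := by
  obtain ⟨γ, rfl⟩ := h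
  obtain ⟨y, hy, rfl⟩ := hν
  exact ⟨x * y, X.mul_mem hx hy, rfl⟩

variable {C : Set (Fin m → Q)} {X : Subgroup (Equiv.Perm (Fin m → Q))}

/-- The stabiliser in `X` of a codeword `β` is transitive on the sphere of radius `s ≤ 2` around `β`:
an element of `X` carrying one point of the sphere to another carries `β` to a codeword at distance at
most `4` from `β`, hence fixes `β`. -/
lemma exists_fix (hX : X ≤ AutG m Q) (hNT : IsNT C X 2)
    (hd : ∀ α ∈ C, ∀ β ∈ C, α ≠ β → 5 ≤ hammingDist α β)
    {β : Fin m → Q} (hβ : β ∈ C) {s : ℕ} (hs : s ≤ 2) {ν ν' : Fin m → Q}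
    (hν : hammingDist ν β = s) (hν' : hammingDist ν' β = s) :
    ∃ g σ, toPerm g σ ∈ X ∧ toPerm g σ β = β ∧ toPerm g σ ν = ν' := by
  have hne : C.Nonempty := ⟨β, hβ⟩
  have key : ∀ γ, hammingDist γ β = s → γ ∈ cell C s := by
    intro γ hγ
    have h1 := distTo_le hβ γ
    obtain ⟨β', hβ', h2⟩ := exists_hammingDist_eq_distTo hne γ
    by_cases h : β' = β
    · subst h
      exact h2.symm.trans hγ
    · have h3 := hd β' hβ' β hβ h
      have h4 := hammingDist_triangle β' γ β
      rw [hammingDist_comm β' γ] at h4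
      omega
  obtain ⟨x, hx, hxν⟩ := (hNT s hs).exists_map (key ν hν) (key ν' hν')
  obtain ⟨g, σ, rfl⟩ := hX hx
  refine ⟨g, σ, hx, ?_, hxν⟩
  by_contra hcon
  have hmem : toPerm g σ β ∈ C := by
    rw [← mem_cell_zero hne] at hβ ⊢
    exact (hNT 0 (by omega)).map_mem hβ hx
  have h3 := hd _ hmem _ hβ hcon
  have h4 := hammingDist_triangle (toPerm g σ β) ν' β
  have h5 := hammingDist_toPerm g σ β ν
  rw [hxν, hammingDist_comm β ν] at h5
  omega

/-- The stabiliser in `X` of a codeword `β` carries any coordinate `i` to any coordinate `j`, and any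
letter `c ≠ β i` at `i` to any letter `d ≠ β j` at `j`. -/
lemma exists_fix_single (hX : X ≤ AutG m Q) (hNT : IsNT C X 2)
    (hd : ∀ α ∈ C, ∀ β ∈ C, α ≠ β → 5 ≤ hammingDist α β)
    {β : Fin m → Q} (hβ : β ∈ C) (i j : Fin m) (c d : Q) (hc : c ≠ β i) (hdj : d ≠ β j) :
    ∃ g σ, toPerm g σ ∈ X ∧ toPerm g σ β = β ∧ σ i = j ∧ g i c = d := by
  obtain ⟨g, σ, hx, h1, h2⟩ := exists_fix hX hNT hd hβ (s := 1) (by omega)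
    (hammingDist_update β i c hc) (hammingDist_update β j d hdj)
  have e1 := congrFun h1 (σ i)
  have e2 := congrFun h2 (σ i)
  rw [toPerm_apply_map] at e1 e2
  rw [Function.update_self] at e2
  have hσ : σ i = j := by
    by_contra hne
    rw [Function.update_of_ne hne, ← e1] at e2
    exact hc ((g i).injective e2)
  refine ⟨g, σ, hx, h1, hσ, ?_⟩
  rw [hσ, Function.update_self] at e2
  exact e2

/-- `μ(X)` is transitive on unordered pairs of coordinates. -/
lemma exists_pair [Nontrivial Q] (hX : X ≤ AutG m Q) (hNT : IsNT C X 2)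
    (hd : ∀ α ∈ C, ∀ β ∈ C, α ≠ β → 5 ≤ hammingDist α β)
    (hne : C.Nonempty) (i j k l : Fin m) (hij : i ≠ j) (hkl : k ≠ l) :
    ∃ σ ∈ ProjGroup X, (σ i = k ∧ σ j = l) ∨ (σ i = l ∧ σ j = k) := by
  obtain ⟨β, hβ⟩ := hne
  obtain ⟨c, hc⟩ := exists_ne (β i)
  obtain ⟨d, hdj⟩ := exists_ne (β j)
  obtain ⟨c', hc'⟩ := exists_ne (β k)
  obtain ⟨d', hd'⟩ := exists_ne (β l)
  obtain ⟨g, σ, hx, h1, h2⟩ := exists_fix hX hNT hd hβ (s := 2) le_rfl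
    (hammingDist_update_update β i j hij c d hc hdj)
    (hammingDist_update_update β k l hkl c' d' hc' hd')
  have key : ∀ p, Function.update (Function.update β i c) j d p ≠ β p → σ p = k ∨ σ p = l := by
    intro p hp
    by_contra! hcon
    have e1 := congrFun h1 (σ p)
    have e2 := congrFun h2 (σ p)
    rw [toPerm_apply_map] at e1 e2
    rw [Function.update_of_ne hcon.2, Function.update_of_ne hcon.1, ← e1] at e2
    exact hp ((g p).injective e2)
  have hi := key i (by simpa [hij] using hc)
  have hj := key j (by simpa using hdj)
  have hs : σ i ≠ σ j := fun h => hij (σ.injective h)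
  refine ⟨σ, ⟨g, hx⟩, ?_⟩
  grind

/-- Some element of `X` fixes a coordinate and interchanges two letters there. -/
lemma exists_letter_swap (hX : X ≤ AutG m Q) (hNT : IsNT C X 2)
    (hd : ∀ α ∈ C, ∀ β ∈ C, α ≠ β → 5 ≤ hammingDist α β)
    {α β : Fin m → Q} (hα : α ∈ C) (hβ : β ∈ C) (hαβ : α ≠ β) :
    ∃ g σ i a b, toPerm g σ ∈ X ∧ σ i = i ∧ a ≠ b ∧ g i a = b ∧ g i b = a := by
  obtain ⟨i, hi⟩ := Function.ne_iff.mp hαβ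
  have hne : C.Nonempty := ⟨α, hα⟩
  -- An element of `X` carrying `α` to `β`.
  obtain ⟨y, hy, hyα⟩ := (hNT 0 (by omega)).exists_map
    ((mem_cell_zero hne α).mpr hα) ((mem_cell_zero hne β).mpr hβ)
  obtain ⟨g₁, σ₁, rfl⟩ := hX hy
  have e1 := congrFun hyα (σ₁ i)
  rw [toPerm_apply_map] at e1
  have hne1 : g₁ i (β i) ≠ β (σ₁ i) := by
    rw [← e1]
    exact fun h => hi ((g₁ i).injective h).symm
  -- An element of `X_β` that moves the coordinate back to `i` and the image of `β i` to `α i`.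
  obtain ⟨g₂, σ₂, hx₂, h2, hσ₂, hg₂⟩ := exists_fix_single hX hNT hd hβ (σ₁ i) i
    (g₁ i (β i)) (α i) hne1 hi
  have e2 := congrFun h2 (σ₂ (σ₁ i))
  rw [toPerm_apply_map, hσ₂] at e2
  refine ⟨fun j => g₂ (σ₁ j) * g₁ j, σ₂ * σ₁, i, α i, β i, ?_, ?_, hi, ?_, ?_⟩
  · rw [← toPerm_mul]
    exact X.mul_mem hx₂ hy
  · simpa using hσ₂
  · simp [e1, e2]
  · simp [hg₂]

/-- Some element of `μ(X)` interchanges two coordinates. -/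
lemma exists_coord_swap (hX : X ≤ AutG m Q) (hXB : X ⊓ BaseG m Q = ⊥) (hNT : IsNT C X 2)
    (hd : ∀ α ∈ C, ∀ β ∈ C, α ≠ β → 5 ≤ hammingDist α β)
    {α β : Fin m → Q} (hα : α ∈ C) (hβ : β ∈ C) (hαβ : α ≠ β) :
    ∃ τ ∈ ProjGroup X, ∃ p r, p ≠ r ∧ τ p = r ∧ τ r = p := by
  obtain ⟨g, σ, i, a, b, hx, hσ, hab, hga, hgb⟩ := exists_letter_swap hX hNT hd hα hβ hαβ
  have step : ∀ γ, toPerm g σ γ i = g i (γ i) := fun γ => by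
    conv_lhs => rw [← hσ]
    exact toPerm_apply_map g σ γ i
  have hodd : ∀ n γ, γ i = a → (toPerm g σ ^ (2 * n + 1)) γ i = b := by
    intro n
    induction n with
    | zero => intro γ hγ; simp only [mul_zero, zero_add, pow_one]; rw [step, hγ, hga]
    | succ n ih =>
      intro γ hγ
      rw [show 2 * (n + 1) + 1 = (2 * n + 1) + 1 + 1 by ring, pow_succ, pow_succ,
        Equiv.Perm.mul_apply, Equiv.Perm.mul_apply]
      exact ih _ (by rw [step, step, hγ, hga, hgb])
  have hone : toPerm g σ ^ orderOf σ = 1 := by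
    obtain ⟨h, hh⟩ := exists_toPerm_pow g σ (orderOf σ)
    have hmem : toPerm g σ ^ orderOf σ ∈ X ⊓ BaseG m Q :=
      ⟨X.pow_mem hx _, h, by rw [hh, pow_orderOf_eq_one]⟩
    rwa [hXB, Subgroup.mem_bot] at hmem
  have heven : Even (orderOf σ) := by
    by_contra hno
    obtain ⟨n, hn⟩ := Nat.not_even_iff_odd.mp hno
    have := hodd n (fun _ => a) rfl
    rw [← hn, hone] at this
    exact hab this
  obtain ⟨n, hn⟩ := heven
  have hpos := orderOf_pos σ
  have hsq : σ ^ n * σ ^ n = 1 := by rw [← pow_add, ← hn, pow_orderOf_eq_one]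
  have hne : σ ^ n ≠ 1 := pow_ne_one_of_lt_orderOf (by omega) (by omega)
  obtain ⟨p, hp⟩ : ∃ p, (σ ^ n) p ≠ p := by
    by_contra! hcon
    exact hne (Equiv.ext hcon)
  refine ⟨σ ^ n, (ProjGroup X).pow_mem ⟨g, hx⟩ n, p, (σ ^ n) p, hp.symm, rfl, ?_⟩
  rw [← Equiv.Perm.mul_apply, hsq, Equiv.Perm.one_apply]

end

end CTC

open CTC in
/-- Corollary 2.8: for an `(X,2)`-neighbour transitive code with
`|C| > 1`, `δ ≥ 5` and `X ∩ B = 1`, the group `μ(X)` acts 2-transitively on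
the coordinates. -/
theorem statement7 {m : ℕ} {Q : Type*} [Fintype Q] [DecidableEq Q]
    (hm : 2 ≤ m) (hq2 : 2 ≤ Fintype.card Q)
    (C : Set (Fin m → Q)) (hC : 1 < C.ncard)
    (X : Subgroup (Equiv.Perm (Fin m → Q))) (hX : X ≤ AutG m Q)
    (hXB : X ⊓ BaseG m Q = ⊥)
    (hρ : 2 ≤ covRad C) (hNT : IsNT C X 2)
    (δ : ℕ) (hδ : IsMinDist C δ) (hδ5 : 5 ≤ δ) :
    ∀ i j k l : Fin m, i ≠ j → k ≠ l →
      ∃ σ ∈ ProjGroup X, σ i = k ∧ σ j = l := by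
  intro i j k l hij hkl
  have : Nontrivial Q := Fintype.one_lt_card_iff_nontrivial.mp (by omega)
  have hd : ∀ α ∈ C, ∀ β ∈ C, α ≠ β → 5 ≤ hammingDist α β := fun α hα β hβ h =>
    hδ5.trans (hδ.2 ⟨α, hα, β, hβ, h, rfl⟩)
  obtain ⟨⟨α, hα, β, hβ, hαβ, -⟩, -⟩ := hδ
  obtain ⟨σ, hσ, h | ⟨h1, h2⟩⟩ := exists_pair hX hNT hd ⟨α, hα⟩ i j k l hij hkl
  · exact ⟨σ, hσ, h⟩
  · obtain ⟨τ, hτ, p, r, hpr, hp, hr⟩ := exists_coord_swap hX hXB hNT hd hα hβ hαβ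
    -- A conjugate of `τ` interchanges `k` and `l`.
    obtain ⟨π, hπ, h⟩ := exists_pair hX hNT hd ⟨α, hα⟩ k l p r hkl hpr
    refine ⟨π⁻¹ * τ * π * σ, mul_mem (mul_mem (mul_mem (inv_mem hπ) hτ) hπ) hσ, ?_⟩
    simp only [Equiv.Perm.mul_apply, h1, h2, Equiv.Perm.inv_eq_iff_eq]
    rcases h with ⟨h3, h4⟩ | ⟨h3, h4⟩ <;> simp [h3, h4, hp, hr]
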